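/- Let 𝔽 be a field of characteristic different from 2, let V be an n-dimensional 𝔽-vector space, and let k be a positive integer with k ≤ n/2. If K and L are nonzero subspaces of ⋀^k V such that x ∧ y = 0 for every x ∈ K and y ∈ L, then dim K + dim L ≤ C(n, k) − C(n−k, k) + 1. -/

import Mathlib

/-!
The bound is reduced to the Hilton–Milner inequality for cross-intersecting families of sets, and
that inequality is proved by Hamidoune's atom method.

**Linear part.** Fix a basis of `V` indexed by `Fin n`, and give the basis vector `e_S` of `⋀^k V`
the weight `∑ i ∈ S, 2 ^ i`. Distinct sets have distinct weights, so every nonzero `x ∈ ⋀^k V` has a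
unique leading set, and a subspace has at least as many leading sets as its dimension
(`finrank_le_card_leading`). If `x`, `y` had disjoint leading sets `S`, `T`, then `(S, T)` would be
the only pair contributing to the coefficient of `e_{S ∪ T}` in `x ∧ y`: weights are additive on
disjoint unions, and no set in the support of `x` or `y` outweighs `S` or `T`. Hence `x ∧ y ≠ 0`
(`mul_ne_zero_of_leading`). So the leading sets of `K` and of `L` form cross-intersecting families.

**Combinatorial part.** In the Kneser graph, let `N(A)` be the set of neighbours of `A`, and minimise
`|N(A)| - |A|` over the nonempty `A` for which `N(A)` is not everything. This function is submodular,
so a smallest minimiser is a block of imprimitivity for the symmetric group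
(`card_add_card_add_degree_le`). The action on `k`-sets is primitive unless `n = 2k`, so the
minimiser is a single `k`-set, and the minimum is `C(n - k, k) - 1`. For `n = 2k` it suffices to pair
each set with its complement.
-/

open Finset Module

section Atoms

/-- The neighbourhood of `A` for the relation `r`. -/
private def nbhd {X : Type*} [Fintype X] (r : X → X → Prop) [DecidableRel r] (A : Finset X) :
    Finset X :=
  {x | ∃ a ∈ A, r a x}

private lemma mem_nbhd {X : Type*} [Fintype X] {r : X → X → Prop} [DecidableRel r] {A : Finset X}
    {x : X} : x ∈ nbhd r A ↔ ∃ a ∈ A, r a x := by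
  simp [nbhd]

private lemma nbhd_mono {X : Type*} [Fintype X] {r : X → X → Prop} [DecidableRel r]
    {A B : Finset X} (h : A ⊆ B) : nbhd r A ⊆ nbhd r B := by
  intro x hx
  obtain ⟨a, ha, hr⟩ := mem_nbhd.1 hx
  exact mem_nbhd.2 ⟨a, h ha, hr⟩

private lemma nbhd_union {X : Type*} [Fintype X] [DecidableEq X] {r : X → X → Prop}
    [DecidableRel r] (A B : Finset X) : nbhd r (A ∪ B) = nbhd r A ∪ nbhd r B := by
  ext x
  simp only [mem_nbhd, mem_union, or_and_right, exists_or]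

open scoped Pointwise in
private lemma nbhd_smul {G X : Type*} [Group G] [MulAction G X] [Fintype X] [DecidableEq X]
    {r : X → X → Prop} [DecidableRel r] (hinv : ∀ (g : G) x y, r (g • x) (g • y) ↔ r x y)
    (g : G) (A : Finset X) : nbhd r (g • A) = g • nbhd r A := by
  ext x
  rw [mem_nbhd, ← Finset.inv_smul_mem_iff, mem_nbhd]
  constructor
  · rintro ⟨a, ha, hr⟩
    refine ⟨g⁻¹ • a, Finset.inv_smul_mem_iff.2 ha, (hinv g _ _).1 ?_⟩
    simpa using hr
  · rintro ⟨a, ha, hr⟩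
    refine ⟨g • a, Finset.smul_mem_smul_finset ha, ?_⟩
    simpa using (hinv g _ _).2 hr

open scoped Pointwise in
/-- If a group acts primitively on the vertices of a graph that is regular of degree `d > 0`, then
any two nonempty vertex sets `A₀`, `B₀` with no edge between them satisfy
`|A₀| + |B₀| + d ≤ |X| + 1`. Edges are given by the symmetric invariant relation `r`. -/
private theorem card_add_card_add_degree_le {G X : Type*} [Group G] [MulAction G X] [Fintype X]
    [DecidableEq X] [MulAction.IsPreprimitive G X] (r : X → X → Prop) [DecidableRel r]
    (hsymm : ∀ x y, r x y → r y x) (hinv : ∀ (g : G) x y, r (g • x) (g • y) ↔ r x y)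
    (d : ℕ) (hd : 0 < d) (hdeg : ∀ x, #{y | r x y} = d) (A₀ B₀ : Finset X)
    (hA₀ : A₀.Nonempty) (hB₀ : B₀.Nonempty) (hAB : ∀ a ∈ A₀, ∀ b ∈ B₀, ¬ r a b) :
    #A₀ + #B₀ + d ≤ Fintype.card X + 1 := by
  classical
  have hsub₀ : nbhd r A₀ ⊆ B₀ᶜ := by
    intro x hx
    obtain ⟨a, ha, hr⟩ := mem_nbhd.1 hx
    exact mem_compl.2 fun hxB => hAB a ha x hxB hr
  let good : Finset (Finset X) := {A | A.Nonempty ∧ nbhd r A ≠ univ}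
  have mem_good : ∀ A, A ∈ good ↔ A.Nonempty ∧ nbhd r A ≠ univ := by simp [good]
  let f : Finset X → ℤ := fun A => (#(nbhd r A) : ℤ) - #A
  have f_def : ∀ A, f A = (#(nbhd r A) : ℤ) - #A := fun _ => rfl
  have hgood₀ : A₀ ∈ good := by
    refine (mem_good _).2 ⟨hA₀, fun h => ?_⟩
    obtain ⟨b, hb⟩ := hB₀
    exact mem_compl.1 (hsub₀ (h ▸ mem_univ b)) hb
  obtain ⟨A₁, hA₁, hmin₁⟩ := exists_min_image good f ⟨A₀, hgood₀⟩
  obtain ⟨A, hA, hminA⟩ := exists_min_image (good.filter fun A => f A = f A₁) card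
    ⟨A₁, mem_filter.2 ⟨hA₁, rfl⟩⟩
  obtain ⟨hAg, hfA⟩ := mem_filter.1 hA
  have hmin : ∀ B ∈ good, f A ≤ f B := fun B hB => hfA ▸ hmin₁ B hB
  have hatom : ∀ B ∈ good, f B ≤ f A → #A ≤ #B := fun B hB h =>
    hminA B (mem_filter.2 ⟨hB, (le_antisymm h (hmin B hB)).trans hfA⟩)
  obtain ⟨hAne, hAN⟩ := (mem_good A).1 hAg
  -- By symmetry of `r`, the complement of `N(A)` is again a minimiser, hence at least as large as `A`.
  have hdual : #A ≤ #(nbhd r A)ᶜ := by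
    have hsub : nbhd r (nbhd r A)ᶜ ⊆ Aᶜ := by
      intro x hx
      obtain ⟨a, ha, hr⟩ := mem_nbhd.1 hx
      exact mem_compl.2 fun hxA => mem_compl.1 ha (mem_nbhd.2 ⟨x, hxA, hsymm _ _ hr⟩)
    refine hatom _ ((mem_good _).2 ⟨?_, fun h => ?_⟩) ?_
    · rwa [nonempty_iff_ne_empty, ne_eq, compl_eq_empty_iff]
    · obtain ⟨a, ha⟩ := hAne
      exact mem_compl.1 (hsub (h ▸ mem_univ a)) ha
    · have h1 := card_le_card hsub
      have h2 := card_compl_add_card A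
      have h3 := card_compl_add_card (nbhd r A)
      rw [f_def, f_def]
      omega
  have hcompl := card_compl_add_card (nbhd r A)
  have hblock : MulAction.IsBlock G (A : Set X) := by
    rw [MulAction.isBlock_iff_smul_eq_of_nonempty]
    intro g hne
    rw [← coe_smul_finset] at hne ⊢
    rw [← coe_inter, coe_nonempty] at hne
    rw [coe_inj]
    by_contra hneq
    have hcard : #(g • A) = #A := card_smul_finset g A
    have hcardN : #(nbhd r (g • A)) = #(nbhd r A) := by
      rw [nbhd_smul hinv, card_smul_finset]
    have hlt : #(g • A ∩ A) < #A := by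
      refine card_lt_card (Finset.ssubset_iff_subset_ne.2 ⟨inter_subset_right, fun h => hneq ?_⟩)
      exact (eq_of_subset_of_card_le (inter_eq_right.1 h) hcard.le).symm
    have hI : g • A ∩ A ∈ good := by
      refine (mem_good _).2 ⟨hne, fun h => hAN ?_⟩
      exact univ_subset_iff.1 (h ▸ nbhd_mono inter_subset_right)
    have hfI : f A < f (g • A ∩ A) := by
      by_contra! h
      exact absurd (hatom _ hI h) (by omega)
    have hNI : #(nbhd r (g • A ∩ A)) ≤ #(nbhd r (g • A) ∩ nbhd r A) :=
      card_le_card (subset_inter (nbhd_mono inter_subset_left) (nbhd_mono inter_subset_right))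
    have hc1 := card_union_add_card_inter (g • A) A
    have hc2 := card_union_add_card_inter (nbhd r (g • A)) (nbhd r A)
    rw [← nbhd_union] at hc2
    rw [f_def, f_def] at hfI
    by_cases hU : nbhd r (g • A ∪ A) = univ
    · rw [hU, card_univ] at hc2
      omega
    · have hfU := hmin _ ((mem_good _).2 ⟨hAne.mono subset_union_right, hU⟩)
      rw [f_def, f_def] at hfU
      omega
  have hfA' : f A = d - 1 := by
    rcases MulAction.IsPreprimitive.isTrivialBlock_of_isBlock hblock with h | h
    · obtain ⟨a, ha⟩ := hAne
      have hs : A = {a} := eq_singleton_iff_unique_mem.2 ⟨ha, fun x hx => h hx ha⟩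
      rw [f_def, hs, card_singleton, ← hdeg a]
      simp [nbhd]
    · -- Every vertex has a neighbour, so the neighbourhood of the whole vertex set is everything.
      refine absurd (eq_univ_iff_forall.2 fun x => ?_) hAN
      obtain ⟨y, hy⟩ := card_pos.1 ((hdeg x).symm ▸ hd)
      have hyA : y ∈ (A : Set X) := h ▸ Set.mem_univ y
      exact mem_nbhd.2 ⟨y, hyA, hsymm _ _ (mem_filter.1 hy).2⟩
  have h1 := hmin _ hgood₀
  rw [hfA', f_def] at h1
  have h2 := card_le_card hsub₀
  have h3 := card_compl_add_card B₀
  omega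

end Atoms

section HiltonMilner

private lemma card_disjoint_powersetCard {n k : ℕ} (S : Set.powersetCard (Fin n) k) :
    #{T : Set.powersetCard (Fin n) k | Disjoint S.val T.val} = (n - k).choose k := by
  have hc : #(S.valᶜ) = n - k := by
    rw [card_compl, Fintype.card_fin, Set.powersetCard.card_eq]
  rw [← hc, ← card_powersetCard]
  refine card_bij (fun T _ => T.val) (fun T hT => ?_) (fun _ _ _ _ h => Subtype.ext h)
    fun T hT => ?_
  · rw [mem_powersetCard]
    refine ⟨?_, T.prop⟩
    rw [subset_compl_iff_disjoint_right]
    exact (mem_filter.1 hT).2.symm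
  · rw [mem_powersetCard, subset_compl_iff_disjoint_right] at hT
    exact ⟨⟨T, hT.2⟩, mem_filter.2 ⟨mem_univ _, hT.1.symm⟩, rfl⟩

/-- The Hilton–Milner inequality: two nonempty cross-intersecting families of `k`-subsets of an
`n`-set, `n ≥ 2k`, have at most `C(n, k) - C(n - k, k) + 1` members in total. -/
private theorem hilton_milner {n k : ℕ} (hk : 0 < k) (hkn : 2 * k ≤ n)
    (A B : Finset (Set.powersetCard (Fin n) k)) (hA : A.Nonempty) (hB : B.Nonempty)
    (hAB : ∀ S ∈ A, ∀ T ∈ B, ¬ Disjoint S.val T.val) :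
    #A + #B ≤ n.choose k - (n - k).choose k + 1 := by
  classical
  have hcard : Fintype.card (Set.powersetCard (Fin n) k) = n.choose k := by
    rw [← Nat.card_eq_fintype_card, Set.powersetCard.card, Nat.card_fin]
  have hle : (n - k).choose k ≤ n.choose k := Nat.choose_le_choose k (Nat.sub_le n k)
  rcases hkn.eq_or_lt with rfl | hlt
  · -- For `n = 2k`, a set and its complement cannot belong to `A` and `B` respectively.
    have hm : k + k = Fintype.card (Fin (2 * k)) := by rw [Fintype.card_fin]; omega
    have hdisj : Disjoint A (B.map (Set.powersetCard.compl hm).toEmbedding) := by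
      rw [disjoint_left]
      intro S hS hSB
      obtain ⟨T, hT, rfl⟩ := mem_map.1 hSB
      refine hAB _ hS T hT ?_
      rw [Equiv.coe_toEmbedding, Set.powersetCard.coe_compl]
      exact disjoint_compl_left
    have h1 := card_le_univ (A.disjUnion _ hdisj)
    rw [card_disjUnion, card_map, hcard] at h1
    have h2 : (2 * k - k).choose k = 1 := by
      rw [show 2 * k - k = k by omega, Nat.choose_self]
    omega
  · have : MulAction.IsPreprimitive (Equiv.Perm (Fin n)) (Set.powersetCard (Fin n) k) :=
      Set.powersetCard.isPreprimitive_perm hk (by rw [Nat.card_fin]; omega)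
        (by rw [Nat.card_fin]; omega)
    have h := card_add_card_add_degree_le (G := Equiv.Perm (Fin n))
      (fun S T : Set.powersetCard (Fin n) k => Disjoint S.val T.val)
      (fun _ _ h => h.symm)
      (fun g S T => by
        simp only [Set.powersetCard.coe_smul, ← disjoint_coe, coe_smul_finset,
          Set.disjoint_smul_set])
      ((n - k).choose k) (Nat.choose_pos (by omega)) card_disjoint_powersetCard A B hA hB hAB
    omega

end HiltonMilner

section Leading

/-- `s` is the leading index of `x` in the basis `e`, with respect to the weight `w`: it lies in the
support of `x` and has maximal weight there. -/
private def IsLeading {F M P : Type*} [Field F] [AddCommGroup M] [Module F M] (e : Basis P F M)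
    (w : P → ℕ) (x : M) (s : P) : Prop :=
  e.repr x s ≠ 0 ∧ ∀ t, e.repr x t ≠ 0 → w t ≤ w s

private lemma exists_isLeading {F M P : Type*} [Field F] [AddCommGroup M] [Module F M]
    (e : Basis P F M) (w : P → ℕ) {x : M} (hx : x ≠ 0) : ∃ s, IsLeading e w x s := by
  have hne : (e.repr x).support.Nonempty := by
    rw [Finsupp.support_nonempty_iff]
    simpa using hx
  obtain ⟨s, hs, hmax⟩ := exists_max_image _ w hne
  exact ⟨s, Finsupp.mem_support_iff.1 hs, fun t ht => hmax t (Finsupp.mem_support_iff.2 ht)⟩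

open Classical in
/-- The set of leading indices of the elements of `K`. -/
private noncomputable def leading {F M P : Type*} [Field F] [AddCommGroup M] [Module F M]
    [Fintype P] (e : Basis P F M) (w : P → ℕ) (K : Submodule F M) : Finset P :=
  {s | ∃ x ∈ K, IsLeading e w x s}

private lemma mem_leading {F M P : Type*} [Field F] [AddCommGroup M] [Module F M]
    [Fintype P] {e : Basis P F M} {w : P → ℕ} {K : Submodule F M} {s : P} :
    s ∈ leading e w K ↔ ∃ x ∈ K, IsLeading e w x s := by
  simp [leading]

/-- An element of `K` whose coordinates at all leading indices of `K` vanish is zero, so restriction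
to these coordinates embeds `K`. -/
private lemma finrank_le_card_leading {F M P : Type*} [Field F] [AddCommGroup M] [Module F M]
    [Fintype P] (e : Basis P F M) (w : P → ℕ) (K : Submodule F M) :
    finrank F K ≤ #(leading e w K) := by
  let φ : K →ₗ[F] (leading e w K → F) :=
    LinearMap.pi fun s => (e.coord s.1).comp K.subtype
  have hφ : Function.Injective φ := by
    rw [← LinearMap.ker_eq_bot, LinearMap.ker_eq_bot']
    intro x hx
    by_contra hne
    obtain ⟨s, hs⟩ := exists_isLeading e w (x := (x : M)) (by simpa using hne)
    exact hs.1 (congrFun hx ⟨s, mem_leading.2 ⟨x, x.2, hs⟩⟩)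
  simpa using LinearMap.finrank_le_finrank_of_injective hφ

end Leading

section Exterior

/-- The weight `∑ i ∈ S, 2 ^ i` of a set: injective, and additive on disjoint unions. -/
private def weight {n : ℕ} (S : Finset (Fin n)) : ℕ := ∑ i ∈ S, 2 ^ (i : ℕ)

private lemma weight_injective {n : ℕ} : Function.Injective (weight (n := n)) := by
  intro S T h
  have key : ∀ S : Finset (Fin n), weight S = ∑ i ∈ S.map Fin.valEmbedding, 2 ^ i := by
    intro S
    simp [weight]
  rw [key, key] at h
  exact map_injective _ (Finset.geomSum_injective le_rfl h)

/-- Elements of `⋀^k V` with disjoint leading sets have nonzero product. -/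
private lemma mul_ne_zero_of_leading {𝔽 V : Type*} [Field 𝔽] [AddCommGroup V] [Module 𝔽 V]
    {n k : ℕ} (b : Basis (Fin n) 𝔽 V) (x y : ⋀[𝔽]^k V) (S T : Set.powersetCard (Fin n) k)
    (hS : IsLeading (b.exteriorPower k) (fun S => weight S.val) x S)
    (hT : IsLeading (b.exteriorPower k) (fun S => weight S.val) y T)
    (hST : Disjoint S.val T.val) :
    (x : ExteriorAlgebra 𝔽 V) * (y : ExteriorAlgebra 𝔽 V) ≠ 0 := by
  classical
  set e := b.exteriorPower k with he
  have hsum : ∀ z : ⋀[𝔽]^k V, (z : ExteriorAlgebra 𝔽 V) =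
      ∑ S', e.repr z S' • b.ExteriorAlgebra S'.val := by
    intro z
    conv_lhs => rw [← e.sum_repr z]
    simp [he, ExteriorAlgebra.basis_eq_coe_basis]
  intro h0
  -- Among all pairs of sets in the supports, only `(S, T)` contributes to the coefficient at `S ∪ T`.
  have hcoef : ∀ S' T' : Set.powersetCard (Fin n) k, (S', T') ≠ (S, T) →
      e.repr x S' * (e.repr y T' * b.ExteriorAlgebra.repr
        (b.ExteriorAlgebra S'.val * b.ExteriorAlgebra T'.val) (S.val ∪ T.val)) = 0 := by
    intro S' T' hne
    by_contra hnz
    obtain ⟨hx', hyz⟩ := ne_zero_and_ne_zero_of_mul hnz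
    obtain ⟨hy', hz⟩ := ne_zero_and_ne_zero_of_mul hyz
    have hd : Disjoint S'.val T'.val := by
      by_contra hd
      rw [ExteriorAlgebra.basis_mul_of_not_disjoint b S' T' hd] at hz
      simp at hz
    rw [ExteriorAlgebra.basis_mul_of_disjoint b S' T' hd] at hz
    have hU : S'.val ∪ T'.val = S.val ∪ T.val := by
      by_contra hU
      apply hz
      rw [Units.smul_def, map_zsmul, Basis.repr_self, Finsupp.smul_apply, Finsupp.single_apply,
        if_neg, smul_zero]
      rwa [Set.powersetCard.coe_disjUnion, disjUnion_eq_union]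
    have hw : weight S'.val + weight T'.val = weight S.val + weight T.val := by
      simp only [weight]
      rw [← sum_union hd, ← sum_union hST, hU]
    have h1 : weight S'.val ≤ weight S.val := hS.2 S' hx'
    have h2 : weight T'.val ≤ weight T.val := hT.2 T' hy'
    apply hne
    rw [Prod.mk.injEq]
    exact ⟨Subtype.ext (weight_injective (by omega)), Subtype.ext (weight_injective (by omega))⟩
  have hterm : ∀ S' T' : Set.powersetCard (Fin n) k, b.ExteriorAlgebra.repr
      ((e.repr x S' • b.ExteriorAlgebra S'.val) * (e.repr y T' • b.ExteriorAlgebra T'.val))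
        (S.val ∪ T.val) =
      e.repr x S' * (e.repr y T' * b.ExteriorAlgebra.repr
        (b.ExteriorAlgebra S'.val * b.ExteriorAlgebra T'.val) (S.val ∪ T.val)) := by
    intro S' T'
    rw [smul_mul_assoc, mul_smul_comm, map_smul, map_smul, Finsupp.smul_apply, Finsupp.smul_apply,
      smul_eq_mul, smul_eq_mul]
  have h1 : b.ExteriorAlgebra.repr ((x : ExteriorAlgebra 𝔽 V) * y) (S.val ∪ T.val) =
      e.repr x S * (e.repr y T * b.ExteriorAlgebra.repr
        (b.ExteriorAlgebra S.val * b.ExteriorAlgebra T.val) (S.val ∪ T.val)) := by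
    rw [hsum x, hsum y, sum_mul_sum, ← Fintype.sum_prod_type', map_sum, Finsupp.finsetSum_apply,
      Fintype.sum_eq_single (S, T)]
    · exact hterm S T
    · rintro ⟨S', T'⟩ hne
      exact (hterm S' T').trans (hcoef S' T' hne)
  rw [h0, map_zero, Finsupp.zero_apply, ExteriorAlgebra.basis_mul_of_disjoint b S T hST,
    Units.smul_def, map_zsmul, Basis.repr_self, Finsupp.smul_apply,
    Set.powersetCard.coe_disjUnion, disjUnion_eq_union, Finsupp.single_eq_same] at h1
  refine mul_ne_zero hS.1 (mul_ne_zero hT.1 ?_) h1.symm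
  rcases Int.units_eq_one_or (Set.powersetCard.permOfDisjoint hST).sign with h | h <;> simp [h]

end Exterior


/-- Cross-annihilating bound (Theorem 1.5): if `K` and `L` are nonzero cross-annihilating
subspaces of `⋀^k V` with `dim V = n` and `k ≤ n/2`, then
`dim K + dim L ≤ C(n,k) - C(n-k,k) + 1`. -/
theorem cross_annihilating_exterior (𝔽 : Type*) [Field 𝔽] (hchar : (2 : 𝔽) ≠ 0)
    (V : Type*) [AddCommGroup V] [Module 𝔽 V] [FiniteDimensional 𝔽 V]
    (n k : ℕ) (hdim : Module.finrank 𝔽 V = n) (hk : 0 < k) (hkn : 2 * k ≤ n)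
    (K L : Submodule 𝔽 (ExteriorAlgebra 𝔽 V)) (hK : K ≤ ⋀[𝔽]^k V) (hL : L ≤ ⋀[𝔽]^k V)
    (hKne : K ≠ ⊥) (hLne : L ≠ ⊥)
    (hann : ∀ x ∈ K, ∀ y ∈ L, x * y = 0) :
    Module.finrank 𝔽 K + Module.finrank 𝔽 L ≤ n.choose k - (n - k).choose k + 1 := by
  classical
  let b : Basis (Fin n) 𝔽 V := finBasisOfFinrankEq 𝔽 V hdim
  let e := b.exteriorPower k
  let w : Set.powersetCard (Fin n) k → ℕ := fun S => weight S.val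
  have hrank : ∀ J : Submodule 𝔽 (ExteriorAlgebra 𝔽 V), J ≤ ⋀[𝔽]^k V →
      finrank 𝔽 J ≤ #(leading e w (J.comap (⋀[𝔽]^k V).subtype)) := fun J hJ =>
    (Submodule.comapSubtypeEquivOfLe hJ).finrank_eq ▸ finrank_le_card_leading e w _
  have hne : ∀ J : Submodule 𝔽 (ExteriorAlgebra 𝔽 V), J ≤ ⋀[𝔽]^k V → J ≠ ⊥ →
      (leading e w (J.comap (⋀[𝔽]^k V).subtype)).Nonempty := by
    intro J hJ hJne
    obtain ⟨x, hx, hx0⟩ := J.ne_bot_iff.1 hJne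
    obtain ⟨s, hs⟩ := exists_isLeading e w (x := (⟨x, hJ hx⟩ : ⋀[𝔽]^k V))
      (by simpa [Subtype.ext_iff] using hx0)
    exact ⟨s, mem_leading.2 ⟨_, hx, hs⟩⟩
  refine (add_le_add (hrank K hK) (hrank L hL)).trans
    (hilton_milner hk hkn _ _ (hne K hK hKne) (hne L hL hLne) ?_)
  intro S hS T hT hST
  obtain ⟨x, hx, hxS⟩ := mem_leading.1 hS
  obtain ⟨y, hy, hyT⟩ := mem_leading.1 hT
  exact mul_ne_zero_of_leading b x y S T hxS hyT hST (hann x hx y hy)
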